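/- arXiv:2501.18187 — 3 statements merged into one kernel-verified Lean document; each statement's English description precedes it below -/
import Mathlib

section
/- Let 𝒟 be a probability distribution on ℝ^D × ℝ with E[‖u‖⁴] < ∞, E[v²·‖u‖²] < ∞ and E[v²] < ∞, and suppose Λ = E[u·uᵀ] is invertible. Set Φ = Cov[u·v] = E[(uv − ξ)(uv − ξ)ᵀ] and ξ = E[u·v]. Draw (u_1, v_1), …, (u_{n+1}, v_{n+1}) i.i.d. from 𝒟 and form the prompt ζ ∈ ℝ^{(D+1)×(n+1)} with i-th column (u_i, v_i) for i ≤ n and last column (u_{n+1}, 0). Then for any Γ ∈ ℝ^{D×D}, the one-layer LSA with weights P = [[0_{D×D}, 0], [0, 1]] and Q = [[Γ, 0], [0, 0]] has prediction v̂ = attn(ζ)[D+1, n+1] satisfying E[(v̂ + v_{n+1})²] = inf_{β ∈ ℝ^D} E[(⟨β, u⟩ + v)²] + (1/n)·tr(Γ·Λ·Γᵀ·Φ) + ξᵀ·(Γᵀ + Λ^{−1})ᵀ·Λ·(Γᵀ + Λ^{−1})·ξ. -/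
open MeasureTheory ProbabilityTheory Matrix

noncomputable section

/-- The mask `M = diag(I_n, 0)`. -/
def attnMask (n : ℕ) : Matrix (Fin (n + 1)) (Fin (n + 1)) ℝ :=
  Matrix.diagonal fun i => if i = Fin.last n then 0 else 1

/-- A linear self-attention layer with weights `P, Q`. -/
def attn (D n : ℕ) (P Q : Matrix (Fin (D + 1)) (Fin (D + 1)) ℝ)
    (Z : Matrix (Fin (D + 1)) (Fin (n + 1)) ℝ) : Matrix (Fin (D + 1)) (Fin (n + 1)) ℝ :=
  Z + (n : ℝ)⁻¹ • (P * Z * attnMask n * (Zᵀ * Q * Z))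

/-- The sparse value matrix `P = [[0,0],[0,1]]`. -/
def Psparse (D : ℕ) : Matrix (Fin (D + 1)) (Fin (D + 1)) ℝ :=
  Matrix.of fun i j => if (i : ℕ) = D ∧ (j : ℕ) = D then 1 else 0

/-- `diag(Γ, 0)`: places `Γ` in the top-left `D × D` block. -/
def diagEmbed (D : ℕ) (Γ : Matrix (Fin D) (Fin D) ℝ) : Matrix (Fin (D + 1)) (Fin (D + 1)) ℝ :=
  Matrix.of fun i j =>
    if hi : (i : ℕ) < D then
      (if hj : (j : ℕ) < D then Γ ⟨(i : ℕ), hi⟩ ⟨(j : ℕ), hj⟩ else 0)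
    else 0

/-- Prompt whose `i`-th column is `(u_i, v_i)` for `i ≤ n` and last column `(u_{n+1}, 0)`. -/
def promptU (D n : ℕ) (u : Fin (n + 1) → Fin D → ℝ) (v : Fin n → ℝ) :
    Matrix (Fin (D + 1)) (Fin (n + 1)) ℝ :=
  Matrix.of fun i j =>
    if hi : (i : ℕ) < D then u j ⟨(i : ℕ), hi⟩
    else if hj : (j : ℕ) < n then v ⟨(j : ℕ), hj⟩ else 0

/-!
The prediction of the layer is `⟨b, u_{n+1}⟩`, where `b = Γᵀ (1/n) ∑ v_i u_i` depends only on the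
context and is therefore independent of the query `(u_{n+1}, v_{n+1})`. Conditioning on the context
turns the loss into `E[R(b)]` for the population risk `R(β) = E[(⟨β, u⟩ + v)²]`. If `η` solves the
normal equation `Λ η = ξ`, then `v - ⟨η, u⟩` is orthogonal to `u`, so
`R(β) = min R + (β + η)ᵀ Λ (β + η)`. The expectation of this quadratic form at `β = b` splits into
its value at the mean `E[b] + η = Γᵀ ξ + η` and the trace of `Λ Cov(b)`, where
`Cov(b) = Γᵀ Φ Γ / n` because the context is an i.i.d. sample.

The normal equation is always solvable: if `Λ a = 0` then `E⟨a, u⟩² = 0`, so `⟨a, ξ⟩ = E[v ⟨a, u⟩]`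
vanishes, and `ξ` lies in the range of the symmetric matrix `Λ`. Hence `η = H ξ` is a solution for
every generalized inverse `H` of `Λ`; it replaces `Λ⁻¹ ξ` when `Λ` is singular.
-/

lemma integrable_smul_of_memLp_two {Ω E : Type*} [MeasurableSpace Ω] {μ : Measure Ω}
    [NormedAddCommGroup E] [NormedSpace ℝ E] {f : Ω → ℝ} {g : Ω → E}
    (hf : MemLp f 2 μ) (hg : MemLp g 2 μ) : Integrable (fun ω ↦ f ω • g ω) μ :=
  memLp_one_iff_integrable.1 (hg.smul hf)

section DotProduct

variable {Ω ι κ : Type*} [Fintype ι] [Fintype κ] {mΩ : MeasurableSpace Ω} {μ : Measure Ω}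
  {X : Ω → ι → ℝ} {p : ENNReal}

lemma memLp_dotProduct (hX : MemLp X p μ) (a : ι → ℝ) : MemLp (fun ω ↦ a ⬝ᵥ X ω) p μ :=
  memLp_finsetSum _ fun i _ ↦ (hX.eval i).const_mul (a i)

lemma memLp_mulVec (hX : MemLp X p μ) (B : Matrix κ ι ℝ) : MemLp (fun ω ↦ B *ᵥ X ω) p μ :=
  .of_eval fun k ↦ memLp_dotProduct hX (B k)

lemma integral_dotProduct (hX : Integrable X μ) (a : ι → ℝ) :
    ∫ ω, a ⬝ᵥ X ω ∂μ = a ⬝ᵥ ∫ ω, X ω ∂μ := by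
  simp only [dotProduct, eval_integral hX.eval, ← integral_const_mul]
  exact integral_finsetSum _ fun i _ ↦ (hX.eval i).const_mul (a i)

lemma integral_mulVec (hX : Integrable X μ) (B : Matrix κ ι ℝ) :
    ∫ ω, B *ᵥ X ω ∂μ = B *ᵥ ∫ ω, X ω ∂μ := by
  ext k
  have hBX : Integrable (fun ω ↦ B *ᵥ X ω) μ :=
    memLp_one_iff_integrable.1 (memLp_mulVec (memLp_one_iff_integrable.2 hX) B)
  rw [eval_integral hBX.eval]
  exact integral_dotProduct hX (B k)

end DotProduct

section SecondMoments

variable {Ω ι κ : Type*} {mΩ : MeasurableSpace Ω}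

/-- The uncentered second moment matrix `E[X Xᵀ]` of a random vector `X`. -/
def secondMomentMatrix (X : Ω → ι → ℝ) (μ : Measure Ω) : Matrix ι ι ℝ :=
  Matrix.of fun i j ↦ ∫ ω, X ω i * X ω j ∂μ

/-- The covariance matrix `E[(X - E X)(X - E X)ᵀ]` of a random vector `X`. -/
def covarianceMatrix (X : Ω → ι → ℝ) (μ : Measure Ω) : Matrix ι ι ℝ :=
  Matrix.of fun i j ↦ cov[fun ω ↦ X ω i, fun ω ↦ X ω j; μ]

variable {μ : Measure Ω} {X : Ω → ι → ℝ}

lemma transpose_secondMomentMatrix : (secondMomentMatrix X μ)ᵀ = secondMomentMatrix X μ := by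
  ext i j
  simp only [secondMomentMatrix, transpose_apply, of_apply, mul_comm]

variable [Fintype ι]

lemma secondMomentMatrix_mulVec (hX : MemLp X 2 μ) (a : ι → ℝ) :
    secondMomentMatrix X μ *ᵥ a = ∫ ω, (a ⬝ᵥ X ω) • X ω ∂μ := by
  have hij (i j) : Integrable (fun ω ↦ a j * X ω j * X ω i) μ :=
    ((hX.eval j).const_mul (a j)).integrable_mul (hX.eval i)
  ext i
  rw [eval_integral (integrable_smul_of_memLp_two (memLp_dotProduct hX a) hX).eval]
  simp only [mulVec, secondMomentMatrix, dotProduct, of_apply, Pi.smul_apply, smul_eq_mul,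
    Finset.sum_mul, ← integral_mul_const]
  rw [integral_finsetSum _ fun j _ ↦ hij i j]
  exact Finset.sum_congr rfl fun j _ ↦ integral_congr_ae (.of_forall fun ω ↦ by ring)

lemma integral_dotProduct_sq (hX : MemLp X 2 μ) (a : ι → ℝ) :
    ∫ ω, (a ⬝ᵥ X ω) ^ 2 ∂μ = a ⬝ᵥ secondMomentMatrix X μ *ᵥ a := by
  rw [secondMomentMatrix_mulVec hX,
    ← integral_dotProduct (integrable_smul_of_memLp_two (memLp_dotProduct hX a) hX)]
  simp only [dotProduct_smul, smul_eq_mul, sq]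

lemma integral_quadraticForm (hX : MemLp X 2 μ) (A : Matrix ι ι ℝ) :
    ∫ ω, X ω ⬝ᵥ A *ᵥ X ω ∂μ = (A * secondMomentMatrix X μ).trace := by
  have hij (i j) : Integrable (fun ω ↦ X ω i * (A i j * X ω j)) μ :=
    (hX.eval i).integrable_mul ((hX.eval j).const_mul _)
  simp only [trace, diag, mul_apply, secondMomentMatrix, of_apply, mulVec, dotProduct,
    Finset.mul_sum, ← integral_const_mul]
  rw [integral_finsetSum _ fun i _ ↦ integrable_finsetSum _ fun j _ ↦ hij i j]
  refine Finset.sum_congr rfl fun i _ ↦ ?_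
  rw [integral_finsetSum _ fun j _ ↦ hij i j]
  exact Finset.sum_congr rfl fun j _ ↦ integral_congr_ae (.of_forall fun ω ↦ by ring)

lemma covarianceMatrix_mulVec [IsFiniteMeasure μ] (hX : MemLp X 2 μ) (B : Matrix κ ι ℝ) :
    covarianceMatrix (fun ω ↦ B *ᵥ X ω) μ = B * covarianceMatrix X μ * Bᵀ := by
  have hB (k i) : MemLp (fun ω ↦ B k i * X ω i) 2 μ := (hX.eval i).const_mul _
  ext k l
  simp only [covarianceMatrix, of_apply, mulVec, dotProduct, mul_apply, transpose_apply,
    Finset.sum_mul]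
  rw [covariance_fun_sum_fun_sum (hB k) (hB l), Finset.sum_comm]
  simp only [covariance_const_mul_left, covariance_const_mul_right]
  exact Finset.sum_congr rfl fun j _ ↦ Finset.sum_congr rfl fun i _ ↦ by ring

variable [IsProbabilityMeasure μ]

lemma secondMomentMatrix_eq_covarianceMatrix_add (hX : MemLp X 2 μ) :
    secondMomentMatrix X μ
      = covarianceMatrix X μ + vecMulVec (∫ ω, X ω ∂μ) (∫ ω, X ω ∂μ) := by
  ext i j
  have hmean := eval_integral fun i ↦ (hX.eval i).integrable one_le_two
  simp [secondMomentMatrix, covarianceMatrix, covariance_eq_sub (hX.eval i) (hX.eval j),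
    vecMulVec_apply, hmean]

lemma integral_quadraticForm_eq_mean_add_trace (hX : MemLp X 2 μ) (A : Matrix ι ι ℝ) :
    ∫ ω, X ω ⬝ᵥ A *ᵥ X ω ∂μ
      = (∫ ω, X ω ∂μ) ⬝ᵥ A *ᵥ (∫ ω, X ω ∂μ) + (A * covarianceMatrix X μ).trace := by
  rw [integral_quadraticForm hX, secondMomentMatrix_eq_covarianceMatrix_add hX, mul_add,
    trace_add, mul_vecMulVec, trace_vecMulVec, dotProduct_comm, add_comm]

lemma covarianceMatrix_add_const (hX : Integrable X μ) (c : ι → ℝ) :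
    covarianceMatrix (fun ω ↦ X ω + c) μ = covarianceMatrix X μ := by
  ext i j
  simp only [covarianceMatrix, of_apply, Pi.add_apply]
  rw [covariance_add_const_left (hX.eval i), covariance_add_const_right (hX.eval j)]

end SecondMoments

section SampleMean

variable {Ω ι κ : Type*} [Fintype κ]

/-- The empirical mean of `X` over the finite sample `τ`. -/
def sampleMean {E : Type*} [AddCommGroup E] [Module ℝ E] (X : Ω → E) (τ : κ → Ω) : E :=
  (Fintype.card κ : ℝ)⁻¹ • ∑ k, X (τ k)

variable {mΩ : MeasurableSpace Ω} {μ : Measure Ω} [IsProbabilityMeasure μ]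

lemma memLp_sampleMean {E : Type*} [NormedAddCommGroup E] [NormedSpace ℝ E] {X : Ω → E}
    {p : ENNReal} (hX : MemLp X p μ) :
    MemLp (fun τ : κ → Ω ↦ sampleMean X τ) p (Measure.pi fun _ ↦ μ) :=
  (memLp_finsetSum _ fun k _ ↦
    hX.comp_measurePreserving (measurePreserving_eval (fun _ ↦ μ) k)).const_smul _

lemma integral_sampleMean [Nonempty κ] {E : Type*} [NormedAddCommGroup E] [NormedSpace ℝ E]
    {X : Ω → E} (hX : Integrable X μ) :
    ∫ τ : κ → Ω, sampleMean X τ ∂(Measure.pi fun _ ↦ μ) = ∫ ω, X ω ∂μ := by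
  simp only [sampleMean]
  rw [integral_smul, integral_finsetSum _ fun k _ ↦ integrable_comp_eval hX]
  simp only [integral_comp_eval (μ := fun _ : κ ↦ μ) hX.aestronglyMeasurable, Finset.sum_const,
    Finset.card_univ, ← Nat.cast_smul_eq_nsmul ℝ]
  exact inv_smul_smul₀ (by simp) _

lemma covariance_comp_eval [DecidableEq κ] {X Y : Ω → ℝ} (hX : MemLp X 2 μ) (hY : MemLp Y 2 μ)
    (k l : κ) :
    cov[fun τ : κ → Ω ↦ X (τ k), fun τ ↦ Y (τ l); Measure.pi fun _ ↦ μ]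
      = if k = l then cov[X, Y; μ] else 0 := by
  have hmp (k : κ) := measurePreserving_eval (fun _ ↦ μ) k
  split_ifs with hkl
  · subst hkl
    rw [← covariance_map_fun (by rw [(hmp k).map_eq]; exact hX.1)
      (by rw [(hmp k).map_eq]; exact hY.1) (hmp k).aemeasurable, (hmp k).map_eq]
  · refine IndepFun.covariance_eq_zero ?_ (hX.comp_measurePreserving (hmp k))
      (hY.comp_measurePreserving (hmp l))
    have hcoord := (iIndepFun_pi (μ := fun _ : κ ↦ μ) (X := fun _ ω ↦ ω)
      fun _ ↦ aemeasurable_id).indepFun hkl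
    exact hcoord.comp₀ (hmp k).aemeasurable (hmp l).aemeasurable
      (by rw [(hmp k).map_eq]; exact hX.aemeasurable)
      (by rw [(hmp l).map_eq]; exact hY.aemeasurable)

lemma covarianceMatrix_sampleMean [Nonempty κ] [Fintype ι] {X : Ω → ι → ℝ} (hX : MemLp X 2 μ) :
    covarianceMatrix (fun τ : κ → Ω ↦ sampleMean X τ) (Measure.pi fun _ ↦ μ)
      = (Fintype.card κ : ℝ)⁻¹ • covarianceMatrix X μ := by
  classical
  have hτ (i : ι) (k : κ) : MemLp (fun τ : κ → Ω ↦ X (τ k) i) 2 (Measure.pi fun _ ↦ μ) :=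
    (hX.eval i).comp_measurePreserving (measurePreserving_eval (fun _ ↦ μ) k)
  ext i j
  simp only [covarianceMatrix, sampleMean, of_apply, Matrix.smul_apply, Pi.smul_apply,
    Finset.sum_apply, smul_eq_mul, covariance_const_mul_left, covariance_const_mul_right]
  rw [covariance_fun_sum_fun_sum (hτ i) (hτ j)]
  simp only [covariance_comp_eval (hX.eval i) (hX.eval j), Finset.sum_ite_eq, Finset.mem_univ,
    if_true, Finset.sum_const, Finset.card_univ, nsmul_eq_mul]
  rw [inv_mul_cancel_left₀ (by simp)]

end SampleMean

section LinearRegression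

variable {Ω ι : Type*} [Fintype ι] {mΩ : MeasurableSpace Ω}

/-- The squared risk `E[(⟨β, X⟩ + Y)²]` of the linear predictor `-β` of `Y` from `X`. -/
def linearRisk (X : Ω → ι → ℝ) (Y : Ω → ℝ) (μ : Measure Ω) (β : ι → ℝ) : ℝ :=
  ∫ ω, (β ⬝ᵥ X ω + Y ω) ^ 2 ∂μ

variable {μ : Measure Ω} {X : Ω → ι → ℝ} {Y : Ω → ℝ}

lemma dotProduct_crossMoment_eq_zero (hX : MemLp X 2 μ) (hY : MemLp Y 2 μ) {a : ι → ℝ}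
    (ha : secondMomentMatrix X μ *ᵥ a = 0) : a ⬝ᵥ ∫ ω, Y ω • X ω ∂μ = 0 := by
  have hsq : ∫ ω, (a ⬝ᵥ X ω) ^ 2 ∂μ = 0 := by
    rw [integral_dotProduct_sq hX, ha, dotProduct_zero]
  have hae : ∀ᵐ ω ∂μ, (a ⬝ᵥ X ω) ^ 2 = 0 :=
    (integral_eq_zero_iff_of_nonneg (fun _ ↦ sq_nonneg _) (memLp_dotProduct hX a).integrable_sq).1
      hsq
  rw [← integral_dotProduct (integrable_smul_of_memLp_two hY hX)]
  refine integral_eq_zero_of_ae (hae.mono fun ω hω ↦ ?_)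
  simp [dotProduct_smul, pow_eq_zero_iff two_ne_zero |>.1 hω]

lemma secondMomentMatrix_mulVec_mulVec_crossMoment (hX : MemLp X 2 μ) (hY : MemLp Y 2 μ)
    {H : Matrix ι ι ℝ}
    (hH : secondMomentMatrix X μ * H * secondMomentMatrix X μ = secondMomentMatrix X μ) :
    secondMomentMatrix X μ *ᵥ (H *ᵥ ∫ ω, Y ω • X ω ∂μ) = ∫ ω, Y ω • X ω ∂μ := by
  classical
  set Λ := secondMomentMatrix X μ
  have hrow (i) : Λ *ᵥ (Λ * H - 1).row i = 0 := by
    have hzero : (Λ * H - 1) * Λ = 0 := by rw [sub_mul, hH, one_mul, sub_self]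
    have hΛ : Λᵀ = Λ := transpose_secondMomentMatrix
    calc Λ *ᵥ (Λ * H - 1).row i = (Λ * H - 1).row i ᵥ* Λ := by rw [← mulVec_transpose, hΛ]
      _ = 0 := congrFun hzero i
  have hres : (Λ * H - 1) *ᵥ ∫ ω, Y ω • X ω ∂μ = 0 :=
    funext fun i ↦ dotProduct_crossMoment_eq_zero hX hY (hrow i)
  rwa [sub_mulVec, one_mulVec, sub_eq_zero, ← mulVec_mulVec] at hres

lemma linearRisk_eq_add_quadraticForm (hX : MemLp X 2 μ) (hY : MemLp Y 2 μ) {η : ι → ℝ}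
    (hη : secondMomentMatrix X μ *ᵥ η = ∫ ω, Y ω • X ω ∂μ) (β : ι → ℝ) :
    linearRisk X Y μ β
      = linearRisk X Y μ (-η) + (β + η) ⬝ᵥ secondMomentMatrix X μ *ᵥ (β + η) := by
  set W : Ω → ℝ := fun ω ↦ -η ⬝ᵥ X ω + Y ω with hW
  have hWL : MemLp W 2 μ := (memLp_dotProduct hX (-η)).add hY
  have horth : ∫ ω, W ω • X ω ∂μ = 0 := by
    simp only [hW, add_smul]
    rw [integral_add (integrable_smul_of_memLp_two (memLp_dotProduct hX (-η)) hX)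
        (integrable_smul_of_memLp_two hY hX),
      ← secondMomentMatrix_mulVec hX, ← hη, mulVec_neg, neg_add_cancel]
  have hcross : ∫ ω, W ω * ((β + η) ⬝ᵥ X ω) ∂μ = 0 := by
    simp only [← smul_eq_mul, ← dotProduct_smul]
    rw [integral_dotProduct (integrable_smul_of_memLp_two hWL hX), horth, dotProduct_zero]
  have hexpand (ω) : (β ⬝ᵥ X ω + Y ω) ^ 2
      = W ω ^ 2 + ((β + η) ⬝ᵥ X ω) ^ 2 + 2 * (W ω * ((β + η) ⬝ᵥ X ω)) := by
    simp only [hW, add_dotProduct, neg_dotProduct]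
    ring
  have hβη := memLp_dotProduct hX (β + η)
  simp only [linearRisk, hexpand]
  rw [integral_add (by exact hWL.integrable_sq.add hβη.integrable_sq)
      (by exact (hWL.integrable_mul hβη).const_mul 2),
    integral_add hWL.integrable_sq hβη.integrable_sq, integral_const_mul, hcross, mul_zero,
    add_zero, integral_dotProduct_sq hX]

lemma iInf_linearRisk (hX : MemLp X 2 μ) (hY : MemLp Y 2 μ) {η : ι → ℝ}
    (hη : secondMomentMatrix X μ *ᵥ η = ∫ ω, Y ω • X ω ∂μ) :
    ⨅ β, linearRisk X Y μ β = linearRisk X Y μ (-η) := by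
  have hle (β) : linearRisk X Y μ (-η) ≤ linearRisk X Y μ β := by
    rw [linearRisk_eq_add_quadraticForm hX hY hη β, ← integral_dotProduct_sq hX]
    exact le_add_of_nonneg_right (integral_nonneg fun _ ↦ sq_nonneg _)
  exact le_antisymm (ciInf_le ⟨_, Set.forall_mem_range.2 hle⟩ _) (le_ciInf hle)

lemma integral_linearRisk {T : Type*} {mT : MeasurableSpace T} {ν : Measure T}
    [IsProbabilityMeasure ν] {b : T → ι → ℝ} (hb : MemLp b 2 ν) (hX : MemLp X 2 μ)
    (hY : MemLp Y 2 μ) {η : ι → ℝ}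
    (hη : secondMomentMatrix X μ *ᵥ η = ∫ ω, Y ω • X ω ∂μ) :
    ∫ t, linearRisk X Y μ (b t) ∂ν
      = (⨅ β, linearRisk X Y μ β)
        + (secondMomentMatrix X μ * covarianceMatrix b ν).trace
        + (∫ t, b t ∂ν + η) ⬝ᵥ secondMomentMatrix X μ *ᵥ (∫ t, b t ∂ν + η) := by
  have hb1 : Integrable b ν := hb.integrable one_le_two
  have hbη : MemLp (fun t ↦ b t + η) 2 ν := hb.add (memLp_const η)
  have hmean : ∫ t, (b t + η) ∂ν = ∫ t, b t ∂ν + η := by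
    rw [integral_add hb1 (integrable_const η)]
    simp
  have hquad : Integrable
      (fun t ↦ (b t + η) ⬝ᵥ secondMomentMatrix X μ *ᵥ (b t + η)) ν :=
    integrable_finsetSum _ fun i _ ↦ (hbη.eval i).integrable_mul ((memLp_mulVec hbη _).eval i)
  simp only [linearRisk_eq_add_quadraticForm hX hY hη (b _)]
  rw [integral_add (integrable_const _) hquad, integral_quadraticForm_eq_mean_add_trace hbη,
    covarianceMatrix_add_const hb1, hmean, iInf_linearRisk hX hY hη]
  simp only [integral_const, probReal_univ, one_smul]
  ring

end LinearRegression

section InContextRisk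

variable {Ω ι : Type*} [Fintype ι] {mΩ : MeasurableSpace Ω} {μ : Measure Ω}
  {X : Ω → ι → ℝ} {Y : Ω → ℝ}

lemma memLp_two_mul_prod {T : Type*} {mT : MeasurableSpace T} {ν : Measure T} [SFinite μ]
    [SFinite ν] {f : Ω → ℝ} {g : T → ℝ} (hf : MemLp f 2 μ) (hg : MemLp g 2 ν) :
    MemLp (fun z : Ω × T ↦ f z.1 * g z.2) 2 (μ.prod ν) := by
  refine (memLp_two_iff_integrable_sq (hf.1.comp_fst.mul hg.1.comp_snd)).2 ?_
  simpa only [Pi.mul_apply, mul_pow] using hf.integrable_sq.mul_prod hg.integrable_sq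

lemma integral_prod_linearRisk {T : Type*} {mT : MeasurableSpace T} {ν : Measure T}
    [SFinite μ] [IsFiniteMeasure ν] {b : T → ι → ℝ} (hb : MemLp b 2 ν) (hX : MemLp X 2 μ)
    (hY : MemLp Y 2 μ) :
    ∫ z : Ω × T, (b z.2 ⬝ᵥ X z.1 + Y z.1) ^ 2 ∂(μ.prod ν)
      = ∫ t, linearRisk X Y μ (b t) ∂ν := by
  have hbX : MemLp (fun z : Ω × T ↦ b z.2 ⬝ᵥ X z.1) 2 (μ.prod ν) := by
    simp only [dotProduct_comm (b _)]
    exact memLp_finsetSum _ fun i _ ↦ memLp_two_mul_prod (hX.eval i) (hb.eval i)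
  exact integral_prod_symm _ (hbX.add (hY.comp_fst ν)).integrable_sq

lemma integral_sq_dotProduct_sampleMean {κ : Type*} [Fintype κ] [Nonempty κ]
    [IsProbabilityMeasure μ] (hX : MemLp X 2 μ) (hY : MemLp Y 2 μ)
    (hYX : MemLp (fun ω ↦ Y ω • X ω) 2 μ) {H : Matrix ι ι ℝ}
    (hH : secondMomentMatrix X μ * H * secondMomentMatrix X μ = secondMomentMatrix X μ)
    (Γ : Matrix ι ι ℝ) :
    ∫ z : Ω × (κ → Ω), ((Γᵀ *ᵥ sampleMean (fun ω ↦ Y ω • X ω) z.2) ⬝ᵥ X z.1 + Y z.1) ^ 2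
        ∂(μ.prod (Measure.pi fun _ ↦ μ))
      = (⨅ β, linearRisk X Y μ β)
        + (Fintype.card κ : ℝ)⁻¹
          * (Γ * secondMomentMatrix X μ * Γᵀ * covarianceMatrix (fun ω ↦ Y ω • X ω) μ).trace
        + (∫ ω, Y ω • X ω ∂μ)
          ⬝ᵥ ((Γᵀ + H)ᵀ * secondMomentMatrix X μ * (Γᵀ + H)) *ᵥ ∫ ω, Y ω • X ω ∂μ := by
  have hmean : MemLp (fun τ : κ → Ω ↦ sampleMean (fun ω ↦ Y ω • X ω) τ) 2
      (Measure.pi fun _ ↦ μ) := memLp_sampleMean hYX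
  rw [integral_prod_linearRisk (memLp_mulVec hmean Γᵀ) hX hY,
    integral_linearRisk (memLp_mulVec hmean Γᵀ) hX hY
      (secondMomentMatrix_mulVec_mulVec_crossMoment hX hY hH),
    integral_mulVec (hmean.integrable one_le_two),
    integral_sampleMean (hYX.integrable one_le_two), covarianceMatrix_mulVec hmean,
    covarianceMatrix_sampleMean hYX, ← add_mulVec]
  congr 1
  · congr 1
    simp only [Matrix.mul_smul, Matrix.smul_mul, trace_smul, smul_eq_mul, transpose_transpose]
    rw [← Matrix.mul_assoc, trace_mul_comm, ← Matrix.mul_assoc, ← Matrix.mul_assoc]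
  · rw [← mulVec_mulVec, ← mulVec_mulVec, dotProduct_transpose_mulVec, dotProduct_comm]

end InContextRisk

section Attention

variable {D n : ℕ}

lemma psparse_mul_apply_last {m : Type*} (A : Matrix (Fin (D + 1)) m ℝ) (j : m) :
    (Psparse D * A) (Fin.last D) j = A (Fin.last D) j := by
  have hne (i : Fin D) : (i : ℕ) ≠ D := i.isLt.ne
  simp [mul_apply, Fin.sum_univ_castSucc, Psparse, hne]

lemma transpose_mul_diagEmbed_mul_apply {l m : Type*} (Γ : Matrix (Fin D) (Fin D) ℝ)
    (A : Matrix (Fin (D + 1)) l ℝ) (B : Matrix (Fin (D + 1)) m ℝ) (i : l) (j : m) :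
    (Aᵀ * diagEmbed D Γ * B) i j
      = (fun a : Fin D ↦ A a.castSucc i) ⬝ᵥ Γ *ᵥ fun a : Fin D ↦ B a.castSucc j := by
  rw [Matrix.mul_assoc]
  simp [mul_apply, Fin.sum_univ_castSucc, diagEmbed, dotProduct, mulVec]

lemma promptU_castSucc_apply (u : Fin (n + 1) → Fin D → ℝ) (v : Fin n → ℝ) (a : Fin D)
    (j : Fin (n + 1)) : promptU D n u v a.castSucc j = u j a := by
  simp [promptU]

lemma promptU_last_castSucc (u : Fin (n + 1) → Fin D → ℝ) (v : Fin n → ℝ) (i : Fin n) :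
    promptU D n u v (Fin.last D) i.castSucc = v i := by
  simp [promptU]

lemma promptU_last_last (u : Fin (n + 1) → Fin D → ℝ) (v : Fin n → ℝ) :
    promptU D n u v (Fin.last D) (Fin.last n) = 0 := by
  simp [promptU]

lemma attn_psparse_diagEmbed_promptU_last (Γ : Matrix (Fin D) (Fin D) ℝ)
    (u : Fin (n + 1) → Fin D → ℝ) (v : Fin n → ℝ) :
    attn D n (Psparse D) (diagEmbed D Γ) (promptU D n u v) (Fin.last D) (Fin.last n)
      = (Γᵀ *ᵥ ((n : ℝ)⁻¹ • ∑ i : Fin n, v i • u i.castSucc)) ⬝ᵥ u (Fin.last n) := by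
  rw [attn, Matrix.add_apply, Matrix.smul_apply, Matrix.mul_assoc, Matrix.mul_assoc,
    psparse_mul_apply_last, mul_apply, Fin.sum_univ_castSucc]
  simp only [attnMask, diagonal_mul, transpose_mul_diagEmbed_mul_apply, promptU_castSucc_apply,
    promptU_last_castSucc, promptU_last_last, Fin.castSucc_ne_last, if_true, if_false]
  rw [mulVec_transpose, ← dotProduct_mulVec, smul_dotProduct, sum_dotProduct]
  simp [smul_dotProduct]

end Attention

lemma integral_pi_eq_integral_prod_init {Ω E : Type*} {mΩ : MeasurableSpace Ω}
    [NormedAddCommGroup E] [NormedSpace ℝ E] (μ : Measure Ω) [SigmaFinite μ] {n : ℕ}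
    (f : Ω × (Fin n → Ω) → E) :
    ∫ ω : Fin (n + 1) → Ω, f (ω (Fin.last n), fun i ↦ ω i.castSucc) ∂(Measure.pi fun _ ↦ μ)
      = ∫ z, f z ∂(μ.prod (Measure.pi fun _ ↦ μ)) := by
  rw [← (measurePreserving_piFinSuccAbove (fun _ : Fin (n + 1) ↦ μ) (Fin.last n)).integral_comp']
  simp [MeasurableEquiv.piFinSuccAbove_apply, Fin.insertNthEquiv, Fin.removeNth_last, Fin.init_def]

theorem stmt5_general (D n : ℕ) (hn : 1 ≤ n)
    (μ : Measure ((Fin D → ℝ) × ℝ)) [IsProbabilityMeasure μ]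
    (hu : Integrable (fun p => ‖p.1‖ ^ 2) μ)
    (h22 : Integrable (fun p => p.2 ^ 2 * ‖p.1‖ ^ 2) μ)
    (h2 : Integrable (fun p => p.2 ^ 2) μ)
    (Λ Φ : Matrix (Fin D) (Fin D) ℝ) (ξ : Fin D → ℝ)
    (hΛ : Λ = Matrix.of fun i j => ∫ p, p.1 i * p.1 j ∂μ)
    (H : Matrix (Fin D) (Fin D) ℝ) (hH : Λ * H * Λ = Λ)
    (hξ : ξ = fun i => ∫ p, p.1 i * p.2 ∂μ)
    (hΦ : Φ = Matrix.of fun i j => ∫ p, (p.1 i * p.2 - ξ i) * (p.1 j * p.2 - ξ j) ∂μ)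
    (Γ : Matrix (Fin D) (Fin D) ℝ) :
    ∫ ω : Fin (n + 1) → (Fin D → ℝ) × ℝ,
        (attn D n (Psparse D) (diagEmbed D Γ)
            (promptU D n (fun t => (ω t).1) fun i => (ω i.castSucc).2)
            (Fin.last D) (Fin.last n)
          + (ω (Fin.last n)).2) ^ 2
        ∂(Measure.pi fun _ : Fin (n + 1) => μ)
      = (⨅ β : Fin D → ℝ, ∫ p, (β ⬝ᵥ p.1 + p.2) ^ 2 ∂μ)
        + (n : ℝ)⁻¹ * (Γ * Λ * Γᵀ * Φ).trace
        + ξ ⬝ᵥ ((Γᵀ + H)ᵀ * Λ * (Γᵀ + H)).mulVec ξ := by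
  have : NeZero n := ⟨by omega⟩
  have hX : MemLp (fun p : (Fin D → ℝ) × ℝ ↦ p.1) 2 μ :=
    (memLp_two_iff_integrable_sq_norm (by fun_prop)).2 hu
  have hY : MemLp (fun p : (Fin D → ℝ) × ℝ ↦ p.2) 2 μ :=
    (memLp_two_iff_integrable_sq (by fun_prop)).2 h2
  have hYX : MemLp (fun p : (Fin D → ℝ) × ℝ ↦ p.2 • p.1) 2 μ :=
    (memLp_two_iff_integrable_sq_norm (by fun_prop)).2 <| by
      simpa only [norm_smul, mul_pow, Real.norm_eq_abs, sq_abs] using h22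
  have hΛ_eq : Λ = secondMomentMatrix (fun p ↦ p.1) μ := hΛ
  have hξ_eq : ξ = ∫ p, p.2 • p.1 ∂μ := by
    ext i
    simp [hξ, eval_integral (integrable_smul_of_memLp_two hY hX).eval, mul_comm]
  have hΦ_eq : Φ = covarianceMatrix (fun p ↦ p.2 • p.1) μ := by
    ext i j
    simp [hΦ, hξ, covarianceMatrix, covariance, mul_comm]
  rw [hΛ_eq] at hH
  have hmain := integral_sq_dotProduct_sampleMean (κ := Fin n) hX hY hYX hH Γ
  rw [← integral_pi_eq_integral_prod_init, Fintype.card_fin, ← hΛ_eq, ← hξ_eq, ← hΦ_eq] at hmain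
  simpa only [attn_psparse_diagEmbed_promptU_last, sampleMean, linearRisk,
    Fintype.card_fin] using hmain

/-- exact expression for the ICL loss of a one-layer LSA with the sparse
weights `P = [[0,0],[0,1]]`, `Q = [[Γ,0],[0,0]]` on i.i.d. prompts from `𝒟`:
`E[(v̂ + v)²] = inf_β E[(⟨β,u⟩+v)²] + (1/n)·tr(Γ Λ Γᵀ Φ) + ξᵀ(Γᵀ+Λ⁻¹)ᵀ Λ (Γᵀ+Λ⁻¹) ξ`. -/
theorem stmt5 (D n : ℕ) (hD : 1 ≤ D) (hn : 1 ≤ n)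
    (μ : Measure ((Fin D → ℝ) × ℝ)) [IsProbabilityMeasure μ]
    (h4 : Integrable (fun p => ‖p.1‖ ^ 4) μ)
    (h22 : Integrable (fun p => p.2 ^ 2 * ‖p.1‖ ^ 2) μ)
    (h2 : Integrable (fun p => p.2 ^ 2) μ)
    (Λ Φ : Matrix (Fin D) (Fin D) ℝ) (ξ : Fin D → ℝ)
    (hΛ : Λ = Matrix.of fun i j => ∫ p, p.1 i * p.1 j ∂μ)
    (hΛinv : IsUnit Λ.det)
    (hξ : ξ = fun i => ∫ p, p.1 i * p.2 ∂μ)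
    (hΦ : Φ = Matrix.of fun i j => ∫ p, (p.1 i * p.2 - ξ i) * (p.1 j * p.2 - ξ j) ∂μ)
    (Γ : Matrix (Fin D) (Fin D) ℝ) :
    ∫ ω : Fin (n + 1) → (Fin D → ℝ) × ℝ,
        (attn D n (Psparse D) (diagEmbed D Γ)
            (promptU D n (fun t => (ω t).1) fun i => (ω i.castSucc).2)
            (Fin.last D) (Fin.last n)
          + (ω (Fin.last n)).2) ^ 2
        ∂(Measure.pi fun _ : Fin (n + 1) => μ)
      = (⨅ β : Fin D → ℝ, ∫ p, (β ⬝ᵥ p.1 + p.2) ^ 2 ∂μ)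
        + (n : ℝ)⁻¹ * (Γ * Λ * Γᵀ * Φ).trace
        + ξ ⬝ᵥ ((Γᵀ + Λ⁻¹)ᵀ * Λ * (Γᵀ + Λ⁻¹)).mulVec ξ :=
  stmt5_general D n hn μ (integrable_norm_pow_of_le (by fun_prop) (by norm_num) h4) h22 h2
    Λ Φ ξ hΛ Λ⁻¹ (by rw [mul_nonsing_inv _ hΛinv, one_mul]) hξ hΦ Γ
end
end

section
/- Fix d, n ≥ 1, set d̄ = (d+2)(d+1)/2, and consider the quadratic ICL setup with the bilinear layer fixed so that the prompt passed to the attention layer is the matrix with i-th column (x̄(x_i), y_i) for i ≤ n and last column (x̄(x_{n+1}), 0). Then for every pair of attention weights P, Q ∈ ℝ^{(d̄+1)×(d̄+1)}, there exists Γ ∈ ℝ^{d̄×d̄} such that the sparse weights P₀ = [[0_{d̄×d̄}, 0], [0, 1]] and Q₀ = [[Γ, 0], [0, 0]] achieve ICL loss at most that of (P, Q): E[(ŷ_{P₀,Q₀} + y_{n+1})²] ≤ E[(ŷ_{P,Q} + y_{n+1})²], where ŷ_{P,Q} is the (d̄+1, n+1) entry of attn_{P,Q} applied to that prompt. In other words,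 the minimum of the ICL loss over all attention weights is not decreased by restricting to this sparse form. -/
open MeasureTheory ProbabilityTheory Matrix

noncomputable section

/-- Product of i.i.d. standard Gaussians on `ℝ^d`. -/
def stdGaussianPi (d : ℕ) : Measure (Fin d → ℝ) :=
  Measure.pi fun _ => gaussianReal 0 1

/-- Extended input `(1, x)`. -/
def xext (d : ℕ) (x : Fin d → ℝ) (i : Fin (d + 1)) : ℝ :=
  if h : (i : ℕ) = 0 then 1 else x ⟨(i : ℕ) - 1, by have := i.isLt; omega⟩

/-- The random quadratic target. -/
def quadTarget (d : ℕ) (w : Fin (d + 1) × Fin (d + 1) → ℝ) (x : Fin d → ℝ) : ℝ :=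
  ∑ p : Fin (d + 1) × Fin (d + 1),
    if p.1 ≤ p.2 then w p * xext d x p.1 * xext d x p.2 else 0

/-- Joint distribution of the quadratic ICL setup. -/
def quadMeasure (d n : ℕ) :
    Measure ((Fin (n + 1) → Fin d → ℝ) × (Fin (d + 1) × Fin (d + 1) → ℝ)) :=
  (Measure.pi fun _ => stdGaussianPi d).prod (Measure.pi fun _ => gaussianReal 0 1)

/-- Position of the pair `(i,j)`, `0 ≤ i ≤ j ≤ d`, in the lexicographic enumeration. -/
def pairEnc (d i j : ℕ) : ℕ :=
  i * (d + 1) - i * (i - 1) / 2 + (j - i)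

/-- Value of the quadratic feature indexed by the pair `(i,j)`. -/
def qval (d : ℕ) (x : Fin d → ℝ) (i j : Fin (d + 1)) : ℝ :=
  if h0 : (i : ℕ) = 0 then
    (if hj : (j : ℕ) = 0 then 1 else x ⟨(j : ℕ) - 1, by have := j.isLt; omega⟩)
  else if hij : (i : ℕ) = (j : ℕ) then
    (x ⟨(i : ℕ) - 1, by have := i.isLt; omega⟩) ^ 2 - 1
  else
    x ⟨(i : ℕ) - 1, by have := i.isLt; omega⟩ *
      x ⟨(j : ℕ) - 1, by have := i.isLt; have := j.isLt; omega⟩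

/-- The quadratic feature map `x̄ : ℝ^d → ℝ^{d̄}`. -/
def qfeat (d : ℕ) (x : Fin d → ℝ) (k : Fin ((d + 2) * (d + 1) / 2)) : ℝ :=
  ∑ p : Fin (d + 1) × Fin (d + 1),
    if p.1 ≤ p.2 ∧ pairEnc d p.1 p.2 = (k : ℕ) then qval d x p.1 p.2 else 0

/-- ICL loss of the attention layer with weights `P, Q` on the prompt whose columns are
the quadratic features `(x̄(x_i), y_i)` (last column `(x̄(x_{n+1}), 0)`). -/
def featLoss (d n : ℕ)
    (P Q : Matrix (Fin ((d + 2) * (d + 1) / 2 + 1)) (Fin ((d + 2) * (d + 1) / 2 + 1)) ℝ) : ℝ :=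
  ∫ ω, (attn ((d + 2) * (d + 1) / 2) n P Q
        (promptU ((d + 2) * (d + 1) / 2) n (fun t => qfeat d (ω.1 t))
          fun i => quadTarget d ω.2 (ω.1 i.castSucc))
        (Fin.last ((d + 2) * (d + 1) / 2)) (Fin.last n)
      + quadTarget d ω.2 (ω.1 (Fin.last n))) ^ 2 ∂quadMeasure d n

/-!
Let `(p, π)` be the last row of `P`, and `q` the last row of `Q` without its final entry. The
prediction is `n⁻¹ ∑ i, (p ⬝ᵥ u i + π v i) (u i ⬝ᵥ Q' u₊ + v i (q ⬝ᵥ u₊))`, with `u₊` the query and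
`Q'` the upper left block of `Q`; its part odd in the labels `v` is `n⁻¹ ∑ i, v i (u i ⬝ᵥ Γ u₊)`
with `Γ = π Q' + p qᵀ`, which is exactly the prediction of the sparse layer given by `Γ`. Since the
target `y₊` is odd in the coefficients `w` as well, the sparse residual is the odd part of the
full residual under `w ↦ -w`. This map preserves the law, and taking the odd part under a
measure-preserving map does not increase the second moment.
-/

section Attention

variable {D n : ℕ} (P Q : Matrix (Fin (D + 1)) (Fin (D + 1)) ℝ)

theorem attn_promptU_last (u : Fin (n + 1) → Fin D → ℝ) (v : Fin n → ℝ) :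
    attn D n P Q (promptU D n u v) (Fin.last D) (Fin.last n) =
      (n : ℝ)⁻¹ * ∑ i : Fin n,
        (Fin.init (P (Fin.last D)) ⬝ᵥ u i.castSucc + P (Fin.last D) (Fin.last D) * v i) *
        (u i.castSucc ⬝ᵥ Q.submatrix Fin.castSucc Fin.castSucc *ᵥ u (Fin.last n) +
          v i * (Fin.init (Q (Fin.last D)) ⬝ᵥ u (Fin.last n))) := by
  have feature_entry (a : Fin D) (j : Fin (n + 1)) : promptU D n u v a.castSucc j = u j a := by
    simp [promptU]
  have label_entry (j : Fin n) : promptU D n u v (Fin.last D) j.castSucc = v j := by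
    simp [promptU]
  have query_label : promptU D n u v (Fin.last D) (Fin.last n) = 0 := by simp [promptU]
  have value (i : Fin n) : (P * promptU D n u v) (Fin.last D) i.castSucc =
      Fin.init (P (Fin.last D)) ⬝ᵥ u i.castSucc + P (Fin.last D) (Fin.last D) * v i := by
    simp only [mul_apply, Fin.sum_univ_castSucc, feature_entry, label_entry, dotProduct, Fin.init]
  have score (i : Fin n) :
      ((promptU D n u v)ᵀ * Q * promptU D n u v) i.castSucc (Fin.last n) =
        u i.castSucc ⬝ᵥ Q.submatrix Fin.castSucc Fin.castSucc *ᵥ u (Fin.last n) +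
          v i * (Fin.init (Q (Fin.last D)) ⬝ᵥ u (Fin.last n)) := by
    rw [Matrix.mul_assoc]
    simp only [mul_apply, transpose_apply, Fin.sum_univ_castSucc, feature_entry, label_entry,
      query_label, mul_zero, add_zero, dotProduct, mulVec, submatrix_apply, Fin.init]
  rw [attn, Matrix.add_apply, Matrix.smul_apply, query_label, zero_add, smul_eq_mul, mul_apply,
    Fin.sum_univ_castSucc]
  simp [attnMask, mul_diagonal, value, score, Fin.castSucc_ne_last]

theorem attn_promptU_last_sparse (Γ : Matrix (Fin D) (Fin D) ℝ) (u : Fin (n + 1) → Fin D → ℝ)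
    (v : Fin n → ℝ) :
    attn D n (Psparse D) (diagEmbed D Γ) (promptU D n u v) (Fin.last D) (Fin.last n) =
      (n : ℝ)⁻¹ * ∑ i : Fin n, v i * (u i.castSucc ⬝ᵥ Γ *ᵥ u (Fin.last n)) := by
  have last_row : Fin.init (Psparse D (Fin.last D)) = 0 := by
    ext a; simp [Fin.init, Psparse, a.isLt.ne]
  have corner : Psparse D (Fin.last D) (Fin.last D) = 1 := by simp [Psparse]
  have block : (diagEmbed D Γ).submatrix Fin.castSucc Fin.castSucc = Γ := by
    ext b c; simp [diagEmbed]
  have score_row : Fin.init (diagEmbed D Γ (Fin.last D)) = 0 := by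
    ext c; simp [Fin.init, diagEmbed]
  simp [attn_promptU_last, last_row, corner, block, score_row]

/-- The matrix `Γ` of the sparse layer whose prediction is the part of the prediction of `(P, Q)`
that is odd in the labels. -/
def oddPartKernel : Matrix (Fin D) (Fin D) ℝ :=
  P (Fin.last D) (Fin.last D) • Q.submatrix Fin.castSucc Fin.castSucc +
    vecMulVec (Fin.init (P (Fin.last D))) (Fin.init (Q (Fin.last D)))

theorem dotProduct_oddPartKernel_mulVec (x z : Fin D → ℝ) :
    x ⬝ᵥ oddPartKernel P Q *ᵥ z =
      P (Fin.last D) (Fin.last D) * (x ⬝ᵥ Q.submatrix Fin.castSucc Fin.castSucc *ᵥ z) +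
        (Fin.init (P (Fin.last D)) ⬝ᵥ x) * (Fin.init (Q (Fin.last D)) ⬝ᵥ z) := by
  simp [oddPartKernel, add_mulVec, smul_mulVec, vecMulVec_mulVec, dotProduct_comm x, mul_comm]

theorem attn_promptU_last_oddPartKernel (u : Fin (n + 1) → Fin D → ℝ) (v : Fin n → ℝ) :
    attn D n (Psparse D) (diagEmbed D (oddPartKernel P Q)) (promptU D n u v)
        (Fin.last D) (Fin.last n) =
      (attn D n P Q (promptU D n u v) (Fin.last D) (Fin.last n) -
        attn D n P Q (promptU D n u (-v)) (Fin.last D) (Fin.last n)) / 2 := by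
  rw [attn_promptU_last_sparse, attn_promptU_last, attn_promptU_last, ← mul_sub,
    ← Finset.sum_sub_distrib, mul_div_assoc, Finset.sum_div]
  congr! 2 with i
  rw [dotProduct_oddPartKernel_mulVec, Pi.neg_apply]
  ring

/-- The quantity `ŷ_{P,Q} + y_{n+1}` whose second moment is the ICL loss, for a prompt with columns
`(u_i, y_i)`, `i ≤ n`, and query `u_{n+1}`; the layer is trained to output `-y_{n+1}`. -/
def iclResidual (u : Fin (n + 1) → Fin D → ℝ) (y : Fin (n + 1) → ℝ) : ℝ :=
  attn D n P Q (promptU D n u (Fin.init y)) (Fin.last D) (Fin.last n) + y (Fin.last n)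

theorem iclResidual_oddPartKernel (u : Fin (n + 1) → Fin D → ℝ) (y : Fin (n + 1) → ℝ) :
    iclResidual (Psparse D) (diagEmbed D (oddPartKernel P Q)) u y =
      (iclResidual P Q u y - iclResidual P Q u (-y)) / 2 := by
  have init_neg : Fin.init (-y) = -Fin.init y := rfl
  simp only [iclResidual, attn_promptU_last_oddPartKernel, init_neg, Pi.neg_apply]
  ring

end Attention

section Symmetrization

variable {Ω : Type*} [MeasurableSpace Ω] {μ : Measure Ω} {σ : Ω → Ω}

theorem integral_sq_half_sub_comp_le (hσ : MeasurePreserving σ μ μ) {f : Ω → ℝ}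
    (hf : Integrable (fun ω => f ω ^ 2) μ) :
    ∫ ω, ((f ω - f (σ ω)) / 2) ^ 2 ∂μ ≤ ∫ ω, f ω ^ 2 ∂μ := by
  have hfσ : Integrable (fun ω => f (σ ω) ^ 2) μ := hσ.integrable_comp_of_integrable hf
  have integral_comp : ∫ ω, f (σ ω) ^ 2 ∂μ = ∫ ω, f ω ^ 2 ∂μ := by
    have h := integral_map hσ.aemeasurable (hσ.map_eq.symm ▸ hf.aestronglyMeasurable)
    rw [hσ.map_eq] at h
    exact h.symm
  calc ∫ ω, ((f ω - f (σ ω)) / 2) ^ 2 ∂μ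
      ≤ ∫ ω, (f ω ^ 2 + f (σ ω) ^ 2) / 2 ∂μ := by
        refine integral_mono_of_nonneg (.of_forall fun ω => sq_nonneg _)
          ((hf.add hfσ).div_const 2) (.of_forall fun ω => ?_)
        dsimp only
        linarith [sq_nonneg (f ω + f (σ ω))]
    _ = ∫ ω, f ω ^ 2 ∂μ := by
        rw [integral_div, integral_add hf hfσ, integral_comp, add_self_div_two]

theorem stmt13_general {D n : ℕ} (P Q : Matrix (Fin (D + 1)) (Fin (D + 1)) ℝ)
    (hσ : MeasurePreserving σ μ μ) {u : Ω → Fin (n + 1) → Fin D → ℝ} {y : Ω → Fin (n + 1) → ℝ}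
    (hu : ∀ ω, u (σ ω) = u ω) (hy : ∀ ω, y (σ ω) = -y ω)
    (hint : Integrable (fun ω => iclResidual P Q (u ω) (y ω) ^ 2) μ) :
    ∃ Γ : Matrix (Fin D) (Fin D) ℝ,
      ∫ ω, iclResidual (Psparse D) (diagEmbed D Γ) (u ω) (y ω) ^ 2 ∂μ ≤
        ∫ ω, iclResidual P Q (u ω) (y ω) ^ 2 ∂μ := by
  refine ⟨oddPartKernel P Q, ?_⟩
  simpa only [iclResidual_oddPartKernel, hu, hy] using integral_sq_half_sub_comp_le hσ hint

end Symmetrization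

section FiniteMoments

variable {Ω : Type*} [MeasurableSpace Ω] {μ : Measure Ω} {f g : Ω → ℝ}

/-- All absolute moments of the real random variable `f` are finite. Unlike square integrability,
this is stable under products, hence under every polynomial operation. -/
def HasFiniteMoments (f : Ω → ℝ) (μ : Measure Ω) : Prop :=
  ∀ p : NNReal, MemLp f p μ

theorem hasFiniteMoments_const [IsFiniteMeasure μ] (c : ℝ) : HasFiniteMoments (fun _ => c) μ :=
  fun _ => memLp_const c

theorem hasFiniteMoments_id_gaussianReal (m : ℝ) (v : NNReal) :
    HasFiniteMoments id (gaussianReal m v) :=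
  memLp_id_gaussianReal

namespace HasFiniteMoments

theorem integrable_sq (hf : HasFiniteMoments f μ) : Integrable (fun ω => f ω ^ 2) μ :=
  (hf 2).integrable_sq

theorem comp_measurePreserving {Ω' : Type*} [MeasurableSpace Ω'] {ν : Measure Ω'} {φ : Ω' → Ω}
    (hf : HasFiniteMoments f μ) (hφ : MeasurePreserving φ ν μ) : HasFiniteMoments (f ∘ φ) ν :=
  fun p => (hf p).comp_measurePreserving hφ

theorem add (hf : HasFiniteMoments f μ) (hg : HasFiniteMoments g μ) :
    HasFiniteMoments (fun ω => f ω + g ω) μ :=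
  fun p => (hf p).add (hg p)

theorem mul (hf : HasFiniteMoments f μ) (hg : HasFiniteMoments g μ) :
    HasFiniteMoments (fun ω => f ω * g ω) μ := by
  intro p
  have : ENNReal.HolderTriple ((2 * p : NNReal) : ENNReal) ((2 * p : NNReal) : ENNReal) p := by
    constructor
    rw [ENNReal.coe_mul, ENNReal.coe_ofNat, ENNReal.mul_inv (by simp) (by simp), ← add_mul,
      ENNReal.inv_two_add_inv_two, one_mul]
  exact (hg (2 * p)).mul (hf (2 * p))

theorem sum {ι : Type*} (s : Finset ι) {f : ι → Ω → ℝ}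
    (hf : ∀ i ∈ s, HasFiniteMoments (f i) μ) : HasFiniteMoments (fun ω => ∑ i ∈ s, f i ω) μ :=
  fun p => memLp_finsetSum s fun i hi => hf i hi p

theorem dotProduct {ι : Type*} [Fintype ι] {u v : Ω → ι → ℝ}
    (hu : ∀ i, HasFiniteMoments (fun ω => u ω i) μ)
    (hv : ∀ i, HasFiniteMoments (fun ω => v ω i) μ) :
    HasFiniteMoments (fun ω => u ω ⬝ᵥ v ω) μ :=
  sum _ fun i _ => (hu i).mul (hv i)

variable [IsFiniteMeasure μ]

theorem iclResidual {D n : ℕ} (P Q : Matrix (Fin (D + 1)) (Fin (D + 1)) ℝ)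
    {u : Ω → Fin (n + 1) → Fin D → ℝ} {y : Ω → Fin (n + 1) → ℝ}
    (hu : ∀ t a, HasFiniteMoments (fun ω => u ω t a) μ)
    (hy : ∀ t, HasFiniteMoments (fun ω => y ω t) μ) :
    HasFiniteMoments (fun ω => iclResidual P Q (u ω) (y ω)) μ := by
  simp only [_root_.iclResidual, attn_promptU_last]
  have const_dotProduct (p : Fin D → ℝ) (t : Fin (n + 1)) :
      HasFiniteMoments (fun ω => p ⬝ᵥ u ω t) μ :=
    dotProduct (fun a => hasFiniteMoments_const (p a)) (hu t)
  refine ((hasFiniteMoments_const _).mul (sum _ fun i _ => mul (add ?value ?label)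
    (add ?score ?labelScore))).add (hy _)
  case value => exact const_dotProduct _ _
  case label => exact (hasFiniteMoments_const _).mul (hy i.castSucc)
  case score => exact dotProduct (hu _) fun a => const_dotProduct _ _
  case labelScore => exact (hy i.castSucc).mul (const_dotProduct _ _)

variable {d : ℕ} {x : Ω → Fin d → ℝ}

theorem xext (hx : ∀ i, HasFiniteMoments (fun ω => x ω i) μ) (i : Fin (d + 1)) :
    HasFiniteMoments (fun ω => xext d (x ω) i) μ := by
  unfold _root_.xext
  split_ifs
  · exact hasFiniteMoments_const 1
  · exact hx _

theorem quadTarget {w : Ω → Fin (d + 1) × Fin (d + 1) → ℝ}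
    (hw : ∀ p, HasFiniteMoments (fun ω => w ω p) μ)
    (hx : ∀ i, HasFiniteMoments (fun ω => x ω i) μ) :
    HasFiniteMoments (fun ω => quadTarget d (w ω) (x ω)) μ := by
  refine sum _ fun p _ => ?_
  split_ifs
  · exact ((hw p).mul (xext hx _)).mul (xext hx _)
  · exact hasFiniteMoments_const 0

theorem qval (hx : ∀ i, HasFiniteMoments (fun ω => x ω i) μ) (i j : Fin (d + 1)) :
    HasFiniteMoments (fun ω => qval d (x ω) i j) μ := by
  unfold _root_.qval
  split_ifs
  · exact hasFiniteMoments_const 1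
  · exact hx _
  · simp only [sq, sub_eq_add_neg]
    exact ((hx _).mul (hx _)).add (hasFiniteMoments_const (-1))
  · exact (hx _).mul (hx _)

theorem qfeat (hx : ∀ i, HasFiniteMoments (fun ω => x ω i) μ)
    (k : Fin ((d + 2) * (d + 1) / 2)) :
    HasFiniteMoments (fun ω => qfeat d (x ω) k) μ := by
  refine sum _ fun p _ => ?_
  split_ifs
  · exact qval hx _ _
  · exact hasFiniteMoments_const 0

end HasFiniteMoments

end FiniteMoments

section QuadraticSetup

variable (d n : ℕ)

instance : IsProbabilityMeasure (stdGaussianPi d) := by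
  unfold stdGaussianPi; infer_instance

instance : IsProbabilityMeasure (quadMeasure d n) := by
  unfold quadMeasure; infer_instance

theorem hasFiniteMoments_input (t : Fin (n + 1)) (i : Fin d) :
    HasFiniteMoments (fun ω => ω.1 t i) (quadMeasure d n) :=
  (hasFiniteMoments_id_gaussianReal 0 1).comp_measurePreserving <|
    (measurePreserving_eval (fun _ => gaussianReal 0 1) i).comp <|
      (measurePreserving_eval (fun _ => stdGaussianPi d) t).comp measurePreserving_fst

theorem hasFiniteMoments_coeff (p : Fin (d + 1) × Fin (d + 1)) :
    HasFiniteMoments (fun ω => ω.2 p) (quadMeasure d n) :=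
  (hasFiniteMoments_id_gaussianReal 0 1).comp_measurePreserving <|
    (measurePreserving_eval (fun _ => gaussianReal 0 1) p).comp measurePreserving_snd

instance (v : NNReal) : (gaussianReal 0 v).IsNegInvariant :=
  ⟨by simpa [Measure.neg] using gaussianReal_map_neg (μ := 0) (v := v)⟩

theorem measurePreserving_neg_coeff :
    MeasurePreserving (Prod.map id Neg.neg) (quadMeasure d n) (quadMeasure d n) :=
  (MeasurePreserving.id _).prod (Measure.measurePreserving_neg _)

variable {d n}

theorem quadTarget_neg (w : Fin (d + 1) × Fin (d + 1) → ℝ) (x : Fin d → ℝ) :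
    quadTarget d (-w) x = -quadTarget d w x := by
  simp only [quadTarget, Pi.neg_apply, neg_mul, ← Finset.sum_neg_distrib, neg_ite, neg_zero]

variable (P Q : Matrix (Fin ((d + 2) * (d + 1) / 2 + 1)) (Fin ((d + 2) * (d + 1) / 2 + 1)) ℝ)

theorem featLoss_eq_integral_sq_iclResidual :
    featLoss d n P Q = ∫ ω, iclResidual P Q (fun t => qfeat d (ω.1 t))
      (fun t => quadTarget d ω.2 (ω.1 t)) ^ 2 ∂quadMeasure d n :=
  rfl

theorem integrable_sq_iclResidual_quadratic :
    Integrable (fun ω => iclResidual P Q (fun t => qfeat d (ω.1 t))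
      (fun t => quadTarget d ω.2 (ω.1 t)) ^ 2) (quadMeasure d n) :=
  (HasFiniteMoments.iclResidual P Q
    (fun t => .qfeat (hasFiniteMoments_input d n t))
    (fun t => .quadTarget (hasFiniteMoments_coeff d n)
      (hasFiniteMoments_input d n t))).integrable_sq

end QuadraticSetup

/-- restricting attention weights to the sparse form
`P₀ = [[0,0],[0,1]]`, `Q₀ = [[Γ,0],[0,0]]` does not increase the minimal ICL loss:
for every `(P, Q)` there is a `Γ` doing at least as well. -/
theorem stmt13 (d n : ℕ) (hd : 1 ≤ d) (hn : 1 ≤ n)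
    (P Q : Matrix (Fin ((d + 2) * (d + 1) / 2 + 1)) (Fin ((d + 2) * (d + 1) / 2 + 1)) ℝ) :
    ∃ Γ : Matrix (Fin ((d + 2) * (d + 1) / 2)) (Fin ((d + 2) * (d + 1) / 2)) ℝ,
      featLoss d n (Psparse ((d + 2) * (d + 1) / 2)) (diagEmbed ((d + 2) * (d + 1) / 2) Γ)
        ≤ featLoss d n P Q := by
  simp only [featLoss_eq_integral_sq_iclResidual]
  exact stmt13_general P Q (measurePreserving_neg_coeff d n) (fun _ => rfl)
    (fun _ => funext fun _ => quadTarget_neg _ _) (integrable_sq_iclResidual_quadratic P Q)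
end
end

section
/- Let 𝒟_X be a probability distribution on ℝ^d and let g_1, …, g_m : ℝ^d → ℝ be measurable functions, orthonormal in L²(𝒟_X) (E[g_i·g_j] = δ_{ij}), each with finite moments of every order under 𝒟_X. Draw x_1, …, x_{n+1} i.i.d. from 𝒟_X and, independently, w ~ N(0, I_m); set y_i = f(x_i; w) where f(x; w) = Σ_{i=1}^m w_i·g_i(x). Let x̃ : ℝ^d → ℝ^D be any measurable map each of whose D coordinate functions has finite moments of every order under 𝒟_X, form the transformed prompt with i-th column (x̃(x_i), y_i) for i ≤ n and last column (x̃(x_{n+1}), 0), and let ŷ be the prediction (the (D+1, n+1) entry of the output) of any one-layer LSA applied to this prompt. Let d̃ be the dimension of the span, in L²(𝒟_X), of the orthogonal projections of the coordinate functions of x̃ onto span{g_1, …, g_m}. If d̃ < m, then E[(ŷ + y_{n+1})²] ≥ m − d̃. -/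
open MeasureTheory ProbabilityTheory Matrix

noncomputable section

/-! The prediction has the form `∑ₖ cₖ(z) x̃ₖ(x)`, where the weights `cₖ` depend only on the context
`z`, consisting of the labelled examples and `w`, and `x` is the query input, which is independent
of `z`. For fixed `z`, the coefficient vector against `g` of the error function of `x` is therefore
`w` plus an element of the span `V` of the coefficient vectors of the `x̃ₖ`, and Bessel's inequality
bounds its mean square over `x` below by the squared norm of the projection of `w` onto `Vᗮ`. For
isotropic `w` the expectation of that squared norm is `dim Vᗮ = m - d̃`. -/

section Bessel

variable {α ι : Type*} [MeasurableSpace α] {μ : Measure α}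

theorem inner_toLp_toLp {f h : α → ℝ} (hf : MemLp f 2 μ) (hh : MemLp h 2 μ) :
    inner ℝ (hf.toLp f) (hh.toLp h) = ∫ x, f x * h x ∂μ := by
  rw [L2.inner_def]
  refine integral_congr_ae ?_
  filter_upwards [hf.coeFn_toLp, hh.coeFn_toLp] with x hfx hhx
  simp [hfx, hhx, mul_comm]

theorem norm_sq_toLp {f : α → ℝ} (hf : MemLp f 2 μ) : ‖hf.toLp f‖ ^ 2 = ∫ x, f x ^ 2 ∂μ := by
  rw [← real_inner_self_eq_norm_sq, inner_toLp_toLp]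
  simp only [sq]

variable {g : ι → α → ℝ}

/-- The vector of coefficients of `f` against the family `g` in `L²(μ)`. For orthonormal `g` it
holds the coordinates of the orthogonal projection of `f` onto the span of `g`. It lives in
`EuclideanSpace` so that its norm is the `L²` norm of that projection. -/
def coeffVector (μ : Measure α) (g : ι → α → ℝ) (f : α → ℝ) : EuclideanSpace ℝ ι :=
  WithLp.toLp 2 fun i => ∫ x, g i x * f x ∂μ

theorem coeffVector_add {f h : α → ℝ} (hg : ∀ i, MemLp (g i) 2 μ) (hf : MemLp f 2 μ)
    (hh : MemLp h 2 μ) :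
    coeffVector μ g (fun x => f x + h x) = coeffVector μ g f + coeffVector μ g h := by
  ext i
  simp only [coeffVector, PiLp.add_apply, mul_add]
  exact integral_add ((hg i).integrable_mul hf) ((hg i).integrable_mul hh)

theorem coeffVector_sum_mul {τ : Type*} [Fintype τ] {h : τ → α → ℝ} (c : τ → ℝ)
    (hg : ∀ i, MemLp (g i) 2 μ) (hh : ∀ k, MemLp (h k) 2 μ) :
    coeffVector μ g (fun x => ∑ k, c k * h k x) = ∑ k, c k • coeffVector μ g (h k) := by
  ext i
  simp only [coeffVector, WithLp.ofLp_sum, Finset.sum_apply, PiLp.smul_apply, smul_eq_mul,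
    Finset.mul_sum, mul_left_comm _ (c _)]
  have hint : ∀ k, Integrable (fun x => c k * (g i x * h k x)) μ := fun k =>
    ((hg i).integrable_mul (hh k)).const_mul (c k)
  simp only [integral_finsetSum _ fun k _ => hint k, integral_const_mul]

theorem finrank_span_coeffVector {τ : Type*} (g : ι → α → ℝ) (h : τ → α → ℝ) :
    Module.finrank ℝ (Submodule.span ℝ (Set.range fun k => coeffVector μ g (h k)))
      = Module.finrank ℝ (Submodule.span ℝ (Set.range fun k i => ∫ x, g i x * h k x ∂μ)) := by
  rw [← LinearEquiv.finrank_map_eq (WithLp.linearEquiv 2 ℝ (ι → ℝ)).symm (Submodule.span ℝ _),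
    Submodule.map_span, ← Set.range_comp]
  rfl

variable [DecidableEq ι]

theorem coeffVector_self (hortho : ∀ i j, ∫ x, g i x * g j x ∂μ = if i = j then 1 else 0)
    (j : ι) : coeffVector μ g (g j) = EuclideanSpace.single j 1 := by
  ext i
  simp [coeffVector, hortho]

variable [Fintype ι]

theorem norm_sq_coeffVector_le {f : α → ℝ} (hg : ∀ i, MemLp (g i) 2 μ)
    (hortho : ∀ i j, ∫ x, g i x * g j x ∂μ = if i = j then 1 else 0) (hf : MemLp f 2 μ) :
    ‖coeffVector μ g f‖ ^ 2 ≤ ∫ x, f x ^ 2 ∂μ := by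
  have hON : Orthonormal ℝ fun i => (hg i).toLp (g i) :=
    orthonormal_iff_ite.2 fun i j => by rw [inner_toLp_toLp, hortho]
  rw [EuclideanSpace.norm_sq_eq, ← norm_sq_toLp hf]
  simpa only [coeffVector, inner_toLp_toLp] using
    hON.sum_inner_products_le (x := hf.toLp f) (s := Finset.univ)

theorem norm_sq_starProjection_le_integral_sq {τ : Type*} [Fintype τ] {h : τ → α → ℝ}
    (hg : ∀ i, MemLp (g i) 2 μ)
    (hortho : ∀ i j, ∫ x, g i x * g j x ∂μ = if i = j then 1 else 0)
    (hh : ∀ k, MemLp (h k) 2 μ) (c : τ → ℝ) (w : ι → ℝ) :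
    ‖(Submodule.span ℝ (Set.range fun k => coeffVector μ g (h k)))ᗮ.starProjection
        (WithLp.toLp 2 w)‖ ^ 2
      ≤ ∫ x, (∑ k, c k * h k x + ∑ i, w i * g i x) ^ 2 ∂μ := by
  set V := Submodule.span ℝ (Set.range fun k => coeffVector μ g (h k))
  have hH : MemLp (fun x => ∑ k, c k * h k x) 2 μ :=
    memLp_finsetSum _ fun k _ => (hh k).const_mul (c k)
  have hY : MemLp (fun x => ∑ i, w i * g i x) 2 μ :=
    memLp_finsetSum _ fun i _ => (hg i).const_mul (w i)
  have hHV : coeffVector μ g (fun x => ∑ k, c k * h k x) ∈ V := by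
    rw [coeffVector_sum_mul c hg hh]
    exact V.sum_mem fun k _ => V.smul_mem _ (Submodule.subset_span ⟨k, rfl⟩)
  have hYw : coeffVector μ g (fun x => ∑ i, w i * g i x) = WithLp.toLp 2 w := by
    ext j
    simp [coeffVector_sum_mul w hg hg, coeffVector_self hortho, Pi.single_apply]
  calc ‖Vᗮ.starProjection (WithLp.toLp 2 w)‖ ^ 2
      = ‖Vᗮ.starProjection (coeffVector μ g fun x =>
          ∑ k, c k * h k x + ∑ i, w i * g i x)‖ ^ 2 := by
        rw [coeffVector_add hg hH hY, hYw, map_add,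
          Submodule.starProjection_orthogonal_apply_eq_zero hHV, zero_add]
    _ ≤ ‖coeffVector μ g fun x => ∑ k, c k * h k x + ∑ i, w i * g i x‖ ^ 2 := by
        gcongr
        exact Vᗮ.norm_starProjection_apply_le _
    _ ≤ ∫ x, (∑ k, c k * h k x + ∑ i, w i * g i x) ^ 2 ∂μ :=
        norm_sq_coeffVector_le hg hortho (hH.add hY)

end Bessel

section Isotropic

variable {Ω ι : Type*} [MeasurableSpace Ω] {κ : Measure Ω} [Fintype ι] [DecidableEq ι]
  {w : Ω → EuclideanSpace ℝ ι}

theorem integral_inner_sq_of_isotropic (hw : MemLp w 2 κ)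
    (hcov : ∀ i j, ∫ ω, w ω i * w ω j ∂κ = if i = j then 1 else 0) (b : EuclideanSpace ℝ ι) :
    ∫ ω, inner ℝ b (w ω) ^ 2 ∂κ = ‖b‖ ^ 2 := by
  have hint : ∀ i j, Integrable (fun ω => b i * b j * (w ω i * w ω j)) κ := fun i j =>
    ((hw.eval_piLp i).integrable_mul (hw.eval_piLp j)).const_mul _
  calc ∫ ω, inner ℝ b (w ω) ^ 2 ∂κ
      = ∫ ω, ∑ i, ∑ j, b i * b j * (w ω i * w ω j) ∂κ := by
        refine integral_congr_ae (.of_forall fun ω => ?_)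
        simp only [sq, PiLp.inner_apply, RCLike.inner_apply, conj_trivial, Finset.sum_mul_sum]
        exact Finset.sum_congr rfl fun i _ => Finset.sum_congr rfl fun j _ => by ring
    _ = ∑ i, ∑ j, b i * b j * ∫ ω, w ω i * w ω j ∂κ := by
        rw [integral_finsetSum _ fun i _ => integrable_finsetSum _ fun j _ => hint i j]
        simp only [integral_finsetSum _ fun j _ => hint _ j, integral_const_mul]
    _ = ‖b‖ ^ 2 := by
        rw [EuclideanSpace.real_norm_sq_eq]
        simp [hcov, sq]

theorem integral_norm_sq_starProjection_of_isotropic (hw : MemLp w 2 κ)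
    (hcov : ∀ i j, ∫ ω, w ω i * w ω j ∂κ = if i = j then 1 else 0)
    (K : Submodule ℝ (EuclideanSpace ℝ ι)) :
    ∫ ω, ‖K.starProjection (w ω)‖ ^ 2 ∂κ = Module.finrank ℝ K := by
  let b := stdOrthonormalBasis ℝ K
  have hexpand : ∀ v, ‖K.starProjection v‖ ^ 2 = ∑ a, inner ℝ (b a : EuclideanSpace ℝ ι) v ^ 2 := by
    intro v
    rw [Submodule.starProjection_apply, ← Submodule.coe_norm, ← b.sum_sq_norm_inner_right]
    simp only [Submodule.inner_orthogonalProjectionOnto_eq_of_mem_left, Real.norm_eq_abs, sq_abs]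
  have hint : ∀ a, Integrable (fun ω => inner ℝ (b a : EuclideanSpace ℝ ι) (w ω) ^ 2) κ :=
    fun a => (hw.const_inner _).integrable_sq
  simp only [hexpand]
  rw [integral_finsetSum _ fun a _ => hint a]
  have hunit : ∀ a, ‖(b a : EuclideanSpace ℝ ι)‖ = 1 := fun a =>
    (Submodule.coe_norm (b a)).symm.trans (b.norm_eq_one a)
  simp [integral_inner_sq_of_isotropic hw hcov, hunit]

end Isotropic

section RankBound

variable {Ω α ι : Type*} [MeasurableSpace Ω] [MeasurableSpace α] {κ : Measure Ω} {μ : Measure α}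

theorem memLp_mul_prod {p : ENNReal} {f : Ω → ℝ} {h : α → ℝ} (hp₀ : p ≠ 0) (hp : p ≠ ⊤)
    (hf : MemLp f p κ) (hh : MemLp h p μ) :
    MemLp (fun z : Ω × α => f z.1 * h z.2) p (κ.prod μ) := by
  have hmeas : AEStronglyMeasurable (fun z : Ω × α => f z.1 * h z.2) (κ.prod μ) :=
    hf.aestronglyMeasurable.comp_fst.mul hh.aestronglyMeasurable.comp_snd
  rw [← integrable_norm_rpow_iff hmeas hp₀ hp]
  simpa only [norm_mul, Real.mul_rpow (norm_nonneg _) (norm_nonneg _)] using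
    (hf.integrable_norm_rpow hp₀ hp).mul_prod (hh.integrable_norm_rpow hp₀ hp)

theorem memLp_sum_mul_prod {p : ENNReal} [Fintype ι] {f : ι → Ω → ℝ} {h : ι → α → ℝ}
    (hp₀ : p ≠ 0) (hp : p ≠ ⊤) (hf : ∀ i, MemLp (f i) p κ) (hh : ∀ i, MemLp (h i) p μ) :
    MemLp (fun z : Ω × α => ∑ i, f i z.1 * h i z.2) p (κ.prod μ) :=
  memLp_finsetSum _ fun i _ => memLp_mul_prod hp₀ hp (hf i) (hh i)

theorem card_sub_finrank_le_integral_sq [SFinite κ] [SFinite μ] [Fintype ι] [DecidableEq ι]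
    {τ : Type*} [Fintype τ] {g : ι → α → ℝ} {h : τ → α → ℝ} {c : τ → Ω → ℝ} {w : ι → Ω → ℝ}
    (hg : ∀ i, MemLp (g i) 2 μ)
    (hortho : ∀ i j, ∫ x, g i x * g j x ∂μ = if i = j then 1 else 0)
    (hh : ∀ k, MemLp (h k) 2 μ) (hc : ∀ k, MemLp (c k) 2 κ) (hw : ∀ i, MemLp (w i) 2 κ)
    (hcov : ∀ i j, ∫ ω, w i ω * w j ω ∂κ = if i = j then 1 else 0) :
    (Fintype.card ι : ℝ)
        - Module.finrank ℝ (Submodule.span ℝ (Set.range fun k i => ∫ x, g i x * h k x ∂μ))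
      ≤ ∫ z : Ω × α, (∑ k, c k z.1 * h k z.2 + ∑ i, w i z.1 * g i z.2) ^ 2 ∂(κ.prod μ) := by
  set V := Submodule.span ℝ (Set.range fun k => coeffVector μ g (h k)) with hV
  have hsq : Integrable (fun z : Ω × α =>
      (∑ k, c k z.1 * h k z.2 + ∑ i, w i z.1 * g i z.2) ^ 2) (κ.prod μ) :=
    ((memLp_sum_mul_prod two_ne_zero ENNReal.ofNat_ne_top hc hh).add
      (memLp_sum_mul_prod two_ne_zero ENNReal.ofNat_ne_top hw hg)).integrable_sq
  calc (Fintype.card ι : ℝ)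
        - Module.finrank ℝ (Submodule.span ℝ (Set.range fun k i => ∫ x, g i x * h k x ∂μ))
      = Module.finrank ℝ Vᗮ := by
        rw [← finrank_span_coeffVector, ← hV, ← finrank_euclideanSpace (𝕜 := ℝ) (ι := ι),
          ← V.finrank_add_finrank_orthogonal]
        push_cast
        ring
    _ = ∫ ω, ‖Vᗮ.starProjection (WithLp.toLp 2 fun i => w i ω)‖ ^ 2 ∂κ :=
        (integral_norm_sq_starProjection_of_isotropic (.of_eval_piLp hw) hcov Vᗮ).symm
    _ ≤ ∫ ω, ∫ x, (∑ k, c k ω * h k x + ∑ i, w i ω * g i x) ^ 2 ∂μ ∂κ :=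
        integral_mono_of_nonneg (.of_forall fun _ => sq_nonneg _) hsq.integral_prod_left
          (.of_forall fun ω =>
            norm_sq_starProjection_le_integral_sq hg hortho hh (fun k => c k ω) fun i => w i ω)
    _ = _ := (integral_prod _ hsq).symm

end RankBound

section Attention

variable {D n : ℕ}

/-- The labelled columns of a prompt: the `j`-th column is `(u_j, v_j)`, with no query column. -/
def contextMatrix (u : Fin n → Fin D → ℝ) (v : Fin n → ℝ) : Matrix (Fin (D + 1)) (Fin n) ℝ :=
  Matrix.of (Fin.snoc (fun k j => u j k) v)

/-- The `k`-th entry of the linear functional that the layer with weights `P, Q` learns from the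
context `C` and applies to the query input: the bottom row of `n⁻¹ P C Cᵀ Q`, without its last
entry. -/
def queryWeight (P Q : Matrix (Fin (D + 1)) (Fin (D + 1)) ℝ) (C : Matrix (Fin (D + 1)) (Fin n) ℝ)
    (k : Fin D) : ℝ :=
  (n : ℝ)⁻¹ * ((P * C) * (Cᵀ * Q)) (Fin.last D) k.castSucc

theorem mul_attnMask_mul {l o : Type*} (A : Matrix l (Fin (n + 1)) ℝ)
    (B : Matrix (Fin (n + 1)) o ℝ) :
    A * attnMask n * B = A.submatrix id Fin.castSucc * B.submatrix Fin.castSucc id := by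
  ext i j
  simp only [Matrix.mul_apply (N := B), Fin.sum_univ_castSucc, attnMask, Matrix.mul_diagonal]
  simp [Matrix.mul_apply, Fin.castSucc_ne_last]

theorem promptU_submatrix_castSucc (u : Fin (n + 1) → Fin D → ℝ) (v : Fin n → ℝ) :
    (promptU D n u v).submatrix id Fin.castSucc = contextMatrix (fun j => u j.castSucc) v := by
  ext i j
  cases i using Fin.lastCases <;> simp [promptU, contextMatrix]

theorem attn_promptU_last_last (P Q : Matrix (Fin (D + 1)) (Fin (D + 1)) ℝ)
    (u : Fin (n + 1) → Fin D → ℝ) (v : Fin n → ℝ) :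
    attn D n P Q (promptU D n u v) (Fin.last D) (Fin.last n)
      = ∑ k, queryWeight P Q (contextMatrix (fun j => u j.castSucc) v) k * u (Fin.last n) k := by
  set Z := promptU D n u v with hZ
  set C := contextMatrix (fun j => u j.castSucc) v
  have hquery : ∀ k : Fin D, Z k.castSucc (Fin.last n) = u (Fin.last n) k := by
    simp [hZ, promptU]
  have hlabel : Z (Fin.last D) (Fin.last n) = 0 := by simp [hZ, promptU]
  have hlayer : P * Z * attnMask n * (Zᵀ * Q * Z) = P * C * (Cᵀ * Q) * Z := by
    have hC : Z.submatrix id Fin.castSucc = C := promptU_submatrix_castSucc u v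
    rw [mul_attnMask_mul, ← hC, Matrix.mul_assoc (P * _)]
    rfl
  rw [attn, hlayer, Matrix.add_apply, Matrix.smul_apply, Matrix.mul_apply (N := Z),
    Fin.sum_univ_castSucc, hlabel]
  simp [queryWeight, hquery, Finset.mul_sum, mul_assoc]

theorem memLp_contextMatrix {Ω : Type*} [MeasurableSpace Ω] {κ : Measure Ω} {p : ENNReal}
    {u : Ω → Fin n → Fin D → ℝ} {v : Ω → Fin n → ℝ}
    (hu : ∀ j k, MemLp (fun ω => u ω j k) p κ) (hv : ∀ j, MemLp (fun ω => v ω j) p κ)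
    (i : Fin (D + 1)) (j : Fin n) : MemLp (fun ω => contextMatrix (u ω) (v ω) i j) p κ := by
  cases i using Fin.lastCases with
  | last => simpa [contextMatrix] using hv j
  | cast k => simpa [contextMatrix] using hu j k

theorem memLp_queryWeight {Ω : Type*} [MeasurableSpace Ω] {κ : Measure Ω}
    {C : Ω → Matrix (Fin (D + 1)) (Fin n) ℝ} (hC : ∀ i j, MemLp (fun ω => C ω i j) 4 κ)
    (P Q : Matrix (Fin (D + 1)) (Fin (D + 1)) ℝ) (k : Fin D) :
    MemLp (fun ω => queryWeight P Q (C ω) k) 2 κ := by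
  have : ENNReal.HolderTriple 4 4 2 := ⟨by
    rw [show (4 : ENNReal) = 2 * 2 by norm_num, ENNReal.mul_inv (by simp) (by simp), ← mul_add,
      ENNReal.inv_two_add_inv_two, mul_one]⟩
  have hPC : ∀ i j, MemLp (fun ω => (P * C ω) i j) 4 κ := fun i j => by
    simpa only [Matrix.mul_apply] using memLp_finsetSum _ fun a _ => (hC a j).const_mul (P i a)
  have hCQ : ∀ j i, MemLp (fun ω => ((C ω)ᵀ * Q) j i) 4 κ := fun j i => by
    simpa only [Matrix.mul_apply, Matrix.transpose_apply] using
      memLp_finsetSum _ fun a _ => (hC a j).mul_const (Q a i)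
  simp only [queryWeight, Matrix.mul_apply (M := P * C _)]
  exact (memLp_finsetSum _ fun j _ => (hCQ j _).mul' (hPC _ j)).const_mul _

end Attention

section Sampling

theorem memLp_of_integrable_abs_pow {α : Type*} [MeasurableSpace α] {μ : Measure α} {f : α → ℝ}
    {k : ℕ} (hk : k ≠ 0) (hf : AEStronglyMeasurable f μ)
    (hint : Integrable (fun x => |f x| ^ k) μ) : MemLp f k μ := by
  rw [← integrable_norm_rpow_iff hf (by exact_mod_cast hk) (ENNReal.natCast_ne_top k)]
  simpa using hint

theorem integral_eval_mul_eval_pi {ι : Type*} [Fintype ι] [DecidableEq ι] {ν : Measure ℝ}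
    [IsProbabilityMeasure ν] (hmean : ∫ x, x ∂ν = 0) (hsq : ∫ x, x ^ 2 ∂ν = 1) (i j : ι) :
    ∫ w : ι → ℝ, w i * w j ∂(Measure.pi fun _ => ν) = if i = j then 1 else 0 := by
  split_ifs with h
  · subst h
    simp only [← sq]
    exact (integral_comp_eval (μ := fun _ : ι => ν) (i := i) (f := fun x : ℝ => x ^ 2)
      (by fun_prop)).trans hsq
  · have hindep : IndepFun (fun w : ι → ℝ => w i) (fun w => w j) (Measure.pi fun _ => ν) :=
      (iIndepFun_pi (μ := fun _ : ι => ν) (X := fun _ x => x) (by fun_prop)).indepFun h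
    have heval : ∫ w : ι → ℝ, w i ∂(Measure.pi fun _ => ν) = 0 :=
      (integral_comp_eval (μ := fun _ : ι => ν) (f := fun x : ℝ => x) (by fun_prop)).trans hmean
    rw [hindep.integral_fun_mul_eq_mul_integral (measurable_pi_apply i).aestronglyMeasurable
      (measurable_pi_apply j).aestronglyMeasurable, heval, zero_mul]

theorem integral_sq_stdGaussianReal : ∫ x, x ^ 2 ∂(gaussianReal 0 1) = 1 := by
  have hvar : Var[id; gaussianReal 0 1] = ((1 : NNReal) : ℝ) := variance_id_gaussianReal
  simpa [variance_eq_integral aemeasurable_id] using hvar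

/-- Separates the query input from the context, so that Fubini applies to the query alone:
`((x₁, …, xₙ₊₁), w)` is sent to `(((x₁, …, xₙ), w), xₙ₊₁)`. -/
def splitQuery (α β : Type*) [MeasurableSpace α] [MeasurableSpace β] (n : ℕ) :
    (Fin (n + 1) → α) × β ≃ᵐ ((Fin n → α) × β) × α :=
  (((MeasurableEquiv.piFinSuccAbove (fun _ => α) (Fin.last n)).prodCongr (.refl β)).trans
    .prodAssoc).trans .prodComm

theorem splitQuery_apply {α β : Type*} [MeasurableSpace α] [MeasurableSpace β] {n : ℕ}
    (ω : (Fin (n + 1) → α) × β) :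
    splitQuery α β n ω = ((fun j : Fin n => ω.1 j.castSucc, ω.2), ω.1 (Fin.last n)) := by
  simp only [← Fin.succAbove_last_apply]
  rfl

theorem measurePreserving_splitQuery {α β : Type*} [MeasurableSpace α] [MeasurableSpace β] (n : ℕ)
    (μ : Measure α) [SigmaFinite μ] (ρ : Measure β) [SigmaFinite ρ] :
    MeasurePreserving (splitQuery α β n) ((Measure.pi fun _ => μ).prod ρ)
      (((Measure.pi fun _ => μ).prod ρ).prod μ) :=
  Measure.measurePreserving_swap.comp <|
    (measurePreserving_prodAssoc μ (Measure.pi fun _ : Fin n => μ) ρ).comp <|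
      (measurePreserving_piFinSuccAbove (fun _ => μ) (Fin.last n)).prod (.id ρ)

end Sampling

theorem stmt19_general {α ι : Type*} [MeasurableSpace α] [Fintype ι] [DecidableEq ι] {D n : ℕ}
    (μ : Measure α) [IsProbabilityMeasure μ] (ρ : Measure (ι → ℝ)) [IsProbabilityMeasure ρ]
    (hρ : ∀ i, MemLp (fun w => w i) 4 ρ)
    (hcov : ∀ i j, ∫ w, w i * w j ∂ρ = if i = j then 1 else 0)
    {g : ι → α → ℝ} (hg : ∀ i, MemLp (g i) 4 μ)
    (hortho : ∀ i j, ∫ x, g i x * g j x ∂μ = if i = j then 1 else 0)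
    {xt : α → Fin D → ℝ} (hxt : ∀ k, MemLp (fun x => xt x k) 4 μ)
    (P Q : Matrix (Fin (D + 1)) (Fin (D + 1)) ℝ) :
    (Fintype.card ι : ℝ)
        - Module.finrank ℝ (Submodule.span ℝ (Set.range fun k i => ∫ x, g i x * xt x k ∂μ))
      ≤ ∫ ω : (Fin (n + 1) → α) × (ι → ℝ),
          (attn D n P Q
              (promptU D n (fun t => xt (ω.1 t)) fun j => ∑ i, ω.2 i * g i (ω.1 j.castSucc))
              (Fin.last D) (Fin.last n)
            + ∑ i, ω.2 i * g i (ω.1 (Fin.last n))) ^ 2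
          ∂((Measure.pi fun _ => μ).prod ρ) := by
  let κ := (Measure.pi fun _ : Fin n => μ).prod ρ
  let C (z : (Fin n → α) × (ι → ℝ)) :=
    contextMatrix (fun j => xt (z.1 j)) fun j => ∑ i, z.2 i * g i (z.1 j)
  have hC : ∀ a j, MemLp (fun z => C z a j) 4 κ := by
    refine memLp_contextMatrix (fun j k => ?_) fun j => ?_
    · exact ((hxt k).comp_measurePreserving (measurePreserving_eval (fun _ => μ) j)).comp_fst ρ
    · simpa only [mul_comm, Function.comp_apply, Function.eval] using
        memLp_sum_mul_prod four_ne_zero ENNReal.ofNat_ne_top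
          (fun i => (hg i).comp_measurePreserving (measurePreserving_eval (fun _ => μ) j)) hρ
  have hκcov : ∀ i j, ∫ z, z.2 i * z.2 j ∂κ = if i = j then 1 else 0 := fun i j => by
    rw [integral_fun_snd fun w : ι → ℝ => w i * w j, hcov, probReal_univ, one_smul]
  have htwo : (2 : ENNReal) ≤ 4 := by norm_num
  have hbound := card_sub_finrank_le_integral_sq (fun i => (hg i).mono_exponent htwo) hortho
    (fun k => (hxt k).mono_exponent htwo) (fun k => memLp_queryWeight hC P Q k)
    (fun i => ((hρ i).mono_exponent htwo).comp_snd _) hκcov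
  rw [← (measurePreserving_splitQuery n μ ρ).integral_comp'] at hbound
  simpa only [splitQuery_apply, attn_promptU_last_last] using hbound

/-- general nonlinear ICL lower bound.  For orthonormal features
`g_1, …, g_m` in `L²(𝒟_X)`, random targets `f(·; w) = Σ wᵢ gᵢ` with `w ~ N(0, I_m)`, and
any kernel map `x̃ : ℝ^d → ℝ^D`, if the span of the orthogonal projections of the
coordinates of `x̃` onto `span{g₁, …, g_m}` (encoded via the coefficient vectors
`(E[gᵢ·x̃ₖ])ᵢ`) has dimension `d̃ < m`, then every one-layer LSA on the transformed
prompt incurs ICL loss at least `m - d̃`. -/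
theorem stmt19 (d m D n : ℕ) (hd : 1 ≤ d) (hm : 1 ≤ m) (hD : 1 ≤ D) (hn : 1 ≤ n)
    (μ : Measure (Fin d → ℝ)) [IsProbabilityMeasure μ]
    (g : Fin m → (Fin d → ℝ) → ℝ) (hgmeas : ∀ i, Measurable (g i))
    (hortho : ∀ i j, (∫ x, g i x * g j x ∂μ) = if i = j then 1 else 0)
    (hgmom : ∀ (i : Fin m) (k : ℕ), Integrable (fun x => |g i x| ^ k) μ)
    (xt : (Fin d → ℝ) → Fin D → ℝ) (hxt : Measurable xt)
    (hxtmom : ∀ (j : Fin D) (k : ℕ), Integrable (fun x => |xt x j| ^ k) μ)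
    (P Q : Matrix (Fin (D + 1)) (Fin (D + 1)) ℝ)
    (dt : ℕ)
    (hdt : dt = Module.finrank ℝ (Submodule.span ℝ (Set.range fun k : Fin D =>
      fun i : Fin m => ∫ x, g i x * xt x k ∂μ)))
    (hlt : dt < m) :
    ((m - dt : ℕ) : ℝ)
      ≤ ∫ ω : (Fin (n + 1) → Fin d → ℝ) × (Fin m → ℝ),
          (attn D n P Q
              (promptU D n (fun t => xt (ω.1 t))
                fun i => ∑ r, ω.2 r * g r (ω.1 i.castSucc))
              (Fin.last D) (Fin.last n)
            + ∑ r, ω.2 r * g r (ω.1 (Fin.last n))) ^ 2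
          ∂((Measure.pi fun _ : Fin (n + 1) => μ).prod
              (Measure.pi fun _ : Fin m => gaussianReal 0 1)) := by
  rw [hdt] at hlt ⊢
  rw [Nat.cast_sub hlt.le]
  have hg4 : ∀ i, MemLp (g i) 4 μ := fun i =>
    memLp_of_integrable_abs_pow four_ne_zero (hgmeas i).aestronglyMeasurable (hgmom i 4)
  have hxt4 : ∀ k, MemLp (fun x => xt x k) 4 μ := fun k =>
    memLp_of_integrable_abs_pow four_ne_zero
      ((measurable_pi_apply k).comp hxt).aestronglyMeasurable (hxtmom k 4)
  have hw4 : ∀ i, MemLp (fun w => w i) 4 (Measure.pi fun _ : Fin m => gaussianReal 0 1) := fun i =>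
    (memLp_id_gaussianReal 4).comp_measurePreserving (measurePreserving_eval _ i)
  have hcov := integral_eval_mul_eval_pi (ι := Fin m) integral_id_gaussianReal
    integral_sq_stdGaussianReal
  simpa only [Fintype.card_fin] using stmt19_general μ _ hw4 hcov hg4 hortho hxt4 P Q
end
end
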